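/- Let n ≥ 2 and m ≥ 1, and fix 1 ≤ k ≤ m. Let L_k ≤ F^(1)_m × … × F^(n-1)_m be the kernel of θ_k : F^(1)_m × … × F^(n-1)_m → ℤ^{m-1} given by θ_k(e^(i)_j) = t_j if j ≤ k−1, θ_k(e^(i)_k) = 0, θ_k(e^(i)_j) = t_{j-1} if j ≥ k+1, and let p_k : F^(1)_m × … × F^(n-1)_m → ℤ be the homomorphism with p_k(e^(i)_j) = 1 if j = k and 0 otherwise. Then L_k ∩ ker p_k = K^{n-1}_m(m), and L_k is the internal semidirect product K^{n-1}_m(m) ⋊ ⟨e^(n-1)_k⟩, where ⟨e^(n-1)_k⟩ is the infinite cyclic subgroup generated by e^(n-1)_k; that is, K^{n-1}_m(m) is normal in L_k, K^{n-1}_m(m) ∩ ⟨e^(n-1)_k⟩ = {1}, and K^{n-1}_m(m)·⟨e^(n-1)_k⟩ = L_k. -/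

import Mathlib

/-- The element `t_j` of `ℤ^r` (written multiplicatively), where indices `j ≥ r` map to `0`. -/
def tvec (m r : ℕ) (j : Fin m) : Multiplicative (Fin r → ℤ) :=
  Multiplicative.ofAdd (if h : (j : ℕ) < r then Pi.single (⟨j, h⟩ : Fin r) (1 : ℤ) else 0)

/-- The homomorphism `F_m → ℤ^r` sending `e_j ↦ t_j` for `j ≤ r` and `e_j ↦ 0` for `j > r`. -/
def facHom (m r : ℕ) : FreeGroup (Fin m) →* Multiplicative (Fin r → ℤ) :=
  FreeGroup.lift (tvec m r)

/-- The homomorphism `θ : F_m^(1) × ⋯ × F_m^(n) → ℤ^r` with `θ(e^(i)_j) = t_j` for `j ≤ r`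
and `θ(e^(i)_j) = 0` for `j > r`. -/
def thetaHom (n m r : ℕ) : (∀ _ : Fin n, FreeGroup (Fin m)) →* Multiplicative (Fin r → ℤ) where
  toFun g := ∏ i, facHom m r (g i)
  map_one' := by simp
  map_mul' a b := by simp [Finset.prod_mul_distrib]

/-- The group `K^n_m(r) = ker θ`. -/
def Kgrp (n m r : ℕ) : Subgroup (∀ _ : Fin n, FreeGroup (Fin m)) := (thetaHom n m r).ker

/-- The values of `θ_k` on the basis of one free factor: `e_j ↦ t_j` for `j ≤ k-1`,
`e_k ↦ 0`, and `e_j ↦ t_{j-1}` for `j ≥ k+1` (1-indexed). -/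
def tveck (m : ℕ) (k : Fin m) (j : Fin m) : Multiplicative (Fin (m - 1) → ℤ) :=
  Multiplicative.ofAdd <|
    if h : (j : ℕ) < (k : ℕ) then
      Pi.single (⟨j, by have := k.isLt; omega⟩ : Fin (m - 1)) (1 : ℤ)
    else if h' : (k : ℕ) < (j : ℕ) then
      Pi.single (⟨(j : ℕ) - 1, by have := j.isLt; omega⟩ : Fin (m - 1)) (1 : ℤ)
    else 0

/-- The homomorphism `θ_k : F_m^(1) × ⋯ × F_m^(n-1) → ℤ^{m-1}`. -/
def thetaKHom (n m : ℕ) (k : Fin m) :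
    (∀ _ : Fin (n - 1), FreeGroup (Fin m)) →* Multiplicative (Fin (m - 1) → ℤ) where
  toFun g := ∏ i, FreeGroup.lift (tveck m k) (g i)
  map_one' := by simp
  map_mul' a b := by simp [Finset.prod_mul_distrib]

/-- The group `L_k = ker θ_k`. -/
def Lgrp (n m : ℕ) (k : Fin m) : Subgroup (∀ _ : Fin (n - 1), FreeGroup (Fin m)) :=
  (thetaKHom n m k).ker

/-- The homomorphism `p_k : F_m^(1) × ⋯ × F_m^(n-1) → ℤ` with `p_k(e^(i)_j) = 1` if `j = k`
and `0` otherwise. -/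
def pHom (n m : ℕ) (k : Fin m) :
    (∀ _ : Fin (n - 1), FreeGroup (Fin m)) →* Multiplicative ℤ where
  toFun g := ∏ i,
    FreeGroup.lift (fun j => Multiplicative.ofAdd (if j = k then (1 : ℤ) else 0)) (g i)
  map_one' := by simp
  map_mul' a b := by simp [Finset.prod_mul_distrib]

/-!
Let `θ : F_m^(1) × ⋯ × F_m^(n-1) → ℤ^m` be the map with kernel `K^{n-1}_m(m)`. Then `p_k` is the
`k`-th coordinate of `θ` and `θ_k` consists of the remaining coordinates, so a tuple killed by both
is killed by `θ`. Moreover `p_k` maps `L_k = ker θ_k` onto `ℤ`, and `1 ↦ e^(i)_k`, for any factor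
`i`, is a section; this splitting gives the semidirect decomposition.
-/

section Splitting

variable {G H : Type*} [Group G] [Group H] {f : G →* H} {g : G}

lemma ker_inf_zpowers_eq_bot (hg : ¬ IsOfFinOrder (f g)) : f.ker ⊓ Subgroup.zpowers g = ⊥ := by
  rw [eq_bot_iff]
  rintro _ ⟨hx, z, rfl⟩
  have hz : f g ^ z = f g ^ (0 : ℤ) := by simpa using hx
  simp [injective_zpow_iff_not_isOfFinOrder.2 hg hz]

lemma exists_eq_mul_mem_inf_ker_mem_zpowers {L : Subgroup G} (hg : g ∈ L) {x : G} (hx : x ∈ L)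
    (hfx : f x ∈ Subgroup.zpowers (f g)) :
    ∃ a ∈ L ⊓ f.ker, ∃ b ∈ Subgroup.zpowers g, x = a * b := by
  obtain ⟨z, hz : f g ^ z = f x⟩ := hfx
  have mem_ker : x * (g ^ z)⁻¹ ∈ f.ker := by simp [hz]
  exact ⟨x * (g ^ z)⁻¹, ⟨L.mul_mem hx (L.inv_mem (L.zpow_mem hg z)), mem_ker⟩,
    g ^ z, ⟨z, rfl⟩, by simp⟩

end Splitting

lemma prod_map_mulSingle {ι M N : Type*} [Fintype ι] [DecidableEq ι] [MulOneClass M]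
    [CommMonoid N] (f : M →* N) (i : ι) (x : M) :
    ∏ j, f ((Pi.mulSingle i x : ι → M) j) = f x := by
  simp [Pi.apply_mulSingle (fun _ => f) (fun _ => map_one f)]

/-- The coordinate projection `ℤ^(m+1) → ℤ^m` forgetting the `k`-th coordinate, written
multiplicatively. -/
def removeNthHom {m : ℕ} (k : Fin (m + 1)) :
    Multiplicative (Fin (m + 1) → ℤ) →* Multiplicative (Fin m → ℤ) :=
  AddMonoidHom.toMultiplicative (LinearMap.funLeft ℤ ℤ k.succAbove).toAddMonoidHom

/-- The `k`-th coordinate function `ℤ^m → ℤ`, written multiplicatively. -/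
def coordHom {m : ℕ} (k : Fin m) : Multiplicative (Fin m → ℤ) →* Multiplicative ℤ :=
  AddMonoidHom.toMultiplicative (Pi.evalAddMonoidHom (fun _ => ℤ) k)

lemma eq_one_iff_removeNthHom_coordHom {m : ℕ} (k : Fin (m + 1))
    (v : Multiplicative (Fin (m + 1) → ℤ)) :
    v = 1 ↔ removeNthHom k v = 1 ∧ coordHom k v = 1 := by
  simp only [← toAdd_eq_zero, funext_iff, Fin.forall_iff_succAbove k]
  exact and_comm

lemma tvec_self (m : ℕ) (j : Fin m) : tvec m m j = Multiplicative.ofAdd (Pi.single j 1) := by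
  simp [tvec]

lemma tveck_self (m : ℕ) (k : Fin m) : tveck m k k = 1 := by
  simp [tveck]

lemma tveck_succAbove {m : ℕ} (k : Fin (m + 1)) (j : Fin m) :
    tveck (m + 1) k (k.succAbove j) = Multiplicative.ofAdd (Pi.single j 1) := by
  rcases lt_or_ge j.castSucc k with h | h
  · have h' : (j : ℕ) < k := h
    simp [tveck, Fin.succAbove_of_castSucc_lt k j h, h']
  · have h' : (k : ℕ) ≤ j := h
    simp [tveck, Fin.succAbove_of_le_castSucc k j h, Nat.lt_succ_of_le h',
      (Nat.lt_succ_of_le h').not_gt]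

lemma removeNthHom_tvec {m : ℕ} (k j : Fin (m + 1)) :
    removeNthHom k (tvec (m + 1) (m + 1) j) = tveck (m + 1) k j := by
  rw [tvec_self]
  apply Multiplicative.toAdd.injective
  ext l
  rcases Fin.eq_self_or_eq_succAbove k j with rfl | ⟨i, rfl⟩
  · simp [removeNthHom, tveck_self, LinearMap.funLeft_apply]
  · simp [removeNthHom, tveck_succAbove, LinearMap.funLeft_apply, Pi.single_apply]

lemma coordHom_tvec {m : ℕ} (k j : Fin m) :
    coordHom k (tvec m m j) = Multiplicative.ofAdd (if j = k then (1 : ℤ) else 0) := by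
  simp [coordHom, tvec_self, Pi.single_apply, eq_comm]

lemma thetaKHom_eq_comp (n : ℕ) {m : ℕ} (k : Fin (m + 1)) :
    thetaKHom n (m + 1) k = (removeNthHom k).comp (thetaHom (n - 1) (m + 1) (m + 1)) := by
  have lift_tveck : FreeGroup.lift (tveck (m + 1) k) =
      (removeNthHom k).comp (facHom (m + 1) (m + 1)) := by
    ext j : 1
    simp [facHom, removeNthHom_tvec]
  ext g : 1
  simp [thetaKHom, thetaHom, lift_tveck]

lemma pHom_eq_comp (n : ℕ) {m : ℕ} (k : Fin m) :
    pHom n m k = (coordHom k).comp (thetaHom (n - 1) m m) := by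
  have lift_ite : FreeGroup.lift (fun j => Multiplicative.ofAdd (if j = k then (1 : ℤ) else 0)) =
      (coordHom k).comp (facHom m m) := by
    ext j : 1
    simp [facHom, coordHom_tvec]
  ext g : 1
  simp [pHom, thetaHom, lift_ite]

lemma Lgrp_inf_ker_pHom (n m : ℕ) (k : Fin m) :
    Lgrp n m k ⊓ (pHom n m k).ker = Kgrp (n - 1) m m := by
  cases m with
  | zero => exact k.elim0
  | succ m =>
    ext g
    simp only [Lgrp, Kgrp, Subgroup.mem_inf, MonoidHom.mem_ker, thetaKHom_eq_comp, pHom_eq_comp,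
      MonoidHom.comp_apply, ← eq_one_iff_removeNthHom_coordHom]

lemma mulSingle_of_mem_Lgrp (n m : ℕ) (k : Fin m) (i : Fin (n - 1)) :
    Pi.mulSingle i (FreeGroup.of k) ∈ Lgrp n m k := by
  simp only [Lgrp, MonoidHom.mem_ker, thetaKHom, MonoidHom.coe_mk, OneHom.coe_mk,
    prod_map_mulSingle, FreeGroup.lift_apply_of, tveck_self]

lemma pHom_mulSingle_of (n m : ℕ) (k : Fin m) (i : Fin (n - 1)) :
    pHom n m k (Pi.mulSingle i (FreeGroup.of k)) = Multiplicative.ofAdd 1 := by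
  simp only [pHom, MonoidHom.coe_mk, OneHom.coe_mk, prod_map_mulSingle, FreeGroup.lift_apply_of,
    if_true]

theorem Lgrp_internal_semidirect_product_general (n m : ℕ) (k : Fin m) (i : Fin (n - 1)) :
    Lgrp n m k ⊓ (pHom n m k).ker = Kgrp (n - 1) m m ∧
    Kgrp (n - 1) m m ≤ Lgrp n m k ∧
    Subgroup.zpowers (Pi.mulSingle i (FreeGroup.of k)) ≤ Lgrp n m k ∧
    (∀ x ∈ Lgrp n m k, ∀ y ∈ Kgrp (n - 1) m m, x * y * x⁻¹ ∈ Kgrp (n - 1) m m) ∧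
    Kgrp (n - 1) m m ⊓ Subgroup.zpowers (Pi.mulSingle i (FreeGroup.of k)) = ⊥ ∧
    (∀ x ∈ Lgrp n m k, ∃ a ∈ Kgrp (n - 1) m m,
      ∃ b ∈ Subgroup.zpowers (Pi.mulSingle i (FreeGroup.of k)), x = a * b) := by
  have K_eq := Lgrp_inf_ker_pHom n m k
  have e_mem := mulSingle_of_mem_Lgrp n m k i
  have p_e := pHom_mulSingle_of n m k i
  have p_e_infinite : ¬ IsOfFinOrder (pHom n m k (Pi.mulSingle i (FreeGroup.of k))) := by
    rw [p_e]
    exact not_isOfFinOrder_of_isMulTorsionFree (by simp)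
  have p_e_generates (x) :
      pHom n m k x ∈ Subgroup.zpowers (pHom n m k (Pi.mulSingle i (FreeGroup.of k))) :=
    ⟨(pHom n m k x).toAdd, by simp [p_e, ← ofAdd_zsmul]⟩
  refine ⟨K_eq, K_eq ▸ inf_le_left, Subgroup.zpowers_le.2 e_mem, ?normal, ?disjoint, ?product⟩
  case normal => exact fun x _ y hy => (thetaHom (n - 1) m m).normal_ker.conj_mem y hy x
  case disjoint =>
    rw [← K_eq, inf_assoc, ker_inf_zpowers_eq_bot p_e_infinite, inf_bot_eq]
  case product =>
    rw [← K_eq]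
    exact fun x hx => exists_eq_mul_mem_inf_ker_mem_zpowers e_mem hx (p_e_generates x)

/-- For `n ≥ 2`, `m ≥ 1` and `k ≤ m`: `L_k ∩ ker p_k = K^{n-1}_m(m)`, and `L_k` is the
internal semidirect product `K^{n-1}_m(m) ⋊ ⟨e^(n-1)_k⟩`: both are contained in `L_k`,
`K^{n-1}_m(m)` is normal in `L_k`, `K^{n-1}_m(m) ∩ ⟨e^(n-1)_k⟩ = 1` and
`K^{n-1}_m(m)·⟨e^(n-1)_k⟩ = L_k`. -/
theorem Lgrp_internal_semidirect_product (n m : ℕ) (hn : 2 ≤ n) (hm : 1 ≤ m) (k : Fin m) :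
    Lgrp n m k ⊓ (pHom n m k).ker = Kgrp (n - 1) m m ∧
    Kgrp (n - 1) m m ≤ Lgrp n m k ∧
    Subgroup.zpowers
        (Pi.mulSingle (⟨n - 2, by omega⟩ : Fin (n - 1)) (FreeGroup.of k)) ≤ Lgrp n m k ∧
    (∀ x ∈ Lgrp n m k, ∀ y ∈ Kgrp (n - 1) m m, x * y * x⁻¹ ∈ Kgrp (n - 1) m m) ∧
    Kgrp (n - 1) m m ⊓
        Subgroup.zpowers
          (Pi.mulSingle (⟨n - 2, by omega⟩ : Fin (n - 1)) (FreeGroup.of k)) = ⊥ ∧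
    (∀ x ∈ Lgrp n m k, ∃ a ∈ Kgrp (n - 1) m m,
      ∃ b ∈ Subgroup.zpowers
          (Pi.mulSingle (⟨n - 2, by omega⟩ : Fin (n - 1)) (FreeGroup.of k)), x = a * b) :=
  Lgrp_internal_semidirect_product_general n m k _
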